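/- Let n > 2 and let X ⊂ ℂⁿ be an algebraic curve. Then there exist a real number r > 0 and a surjective linear map π : ℂⁿ → ℂ² such that the restriction of π to X is a proper map, and the restriction of π to X \ π⁻¹(B(0,r)) is a bi-Lipschitz embedding into ℂ² \ B(0,r); that is, there exists C ≥ 1 such that C⁻¹·‖x − y‖ ≤ ‖π(x) − π(y)‖ ≤ C·‖x − y‖ for all x, y ∈ X \ π⁻¹(B(0,r)). -/

import Mathlib

open Set Metric

noncomputable section

/-- An algebraic set in ℂᵏ: the common zero set of a finite family of polynomials. -/
def IsAlgebraicSet {k : ℕ} (X : Set (EuclideanSpace ℂ (Fin k))) : Prop :=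
  ∃ S : Finset (MvPolynomial (Fin k) ℂ),
    X = {x | ∀ p ∈ S, MvPolynomial.eval (fun i => x i) p = 0}

/-- An irreducible algebraic curve: an infinite algebraic set all of whose proper algebraic
subsets are finite. -/
def IsIrreducibleAlgebraicCurve {k : ℕ} (X : Set (EuclideanSpace ℂ (Fin k))) : Prop :=
  IsAlgebraicSet X ∧ X.Infinite ∧ ∀ Y, IsAlgebraicSet Y → Y ⊂ X → Y.Finite

/-- An algebraic curve: a finite union of irreducible algebraic curves. -/
def IsAlgebraicCurve {k : ℕ} (X : Set (EuclideanSpace ℂ (Fin k))) : Prop :=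
  ∃ F : Finset (Set (EuclideanSpace ℂ (Fin k))),
    (∀ C ∈ F, IsIrreducibleAlgebraicCurve C) ∧ X = ⋃ C ∈ F, C

/-- `f` maps `X` bijectively onto `Y` and is bi-Lipschitz (outer metric). -/
def IsBiLipschitzOn {E F : Type*} [NormedAddCommGroup E] [NormedAddCommGroup F]
    (f : E → F) (X : Set E) (Y : Set F) : Prop :=
  Set.BijOn f X Y ∧ ∃ C : ℝ, 1 ≤ C ∧ ∀ x ∈ X, ∀ x' ∈ X,
    C⁻¹ * ‖x - x'‖ ≤ ‖f x - f x'‖ ∧ ‖f x - f x'‖ ≤ C * ‖x - x'‖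

/-- `X` and `Y` are bi-Lipschitz equivalent (with respect to the outer Euclidean metric). -/
def BiLipschitzEquiv {E F : Type*} [NormedAddCommGroup E] [NormedAddCommGroup F]
    (X : Set E) (Y : Set F) : Prop :=
  ∃ f : E → F, IsBiLipschitzOn f X Y

/-- `X` and `Y` are bi-Lipschitz equivalent at infinity. -/
def BiLipschitzEquivAtInfinity {E F : Type*} [NormedAddCommGroup E] [NormedAddCommGroup F]
    (X : Set E) (Y : Set F) : Prop :=
  ∃ (K₁ : Set E) (K₂ : Set F), IsCompact K₁ ∧ IsCompact K₂ ∧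
    BiLipschitzEquiv (X \ K₁) (Y \ K₂)

/-- The germs `(X, p)` and `(Y, q)` are bi-Lipschitz equivalent. -/
def GermBiLipschitzEquiv {E F : Type*} [NormedAddCommGroup E] [NormedAddCommGroup F]
    (X : Set E) (p : E) (Y : Set F) (q : F) : Prop :=
  ∃ (U : Set E) (V : Set F), IsOpen U ∧ IsOpen V ∧ p ∈ U ∧ q ∈ V ∧
    ∃ f : E → F, IsBiLipschitzOn f (X ∩ U) (Y ∩ V) ∧ f p = q

/-- `γ` maps `D` homeomorphically onto `S`. -/
def MapsHomeomorphicallyOnto {E : Type*} [TopologicalSpace E]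
    (γ : ℂ → E) (D : Set ℂ) (S : Set E) : Prop :=
  Set.InjOn γ D ∧ γ '' D = S ∧ ContinuousOn γ D ∧
    ∃ σ : E → ℂ, ContinuousOn σ S ∧ ∀ z ∈ D, σ (γ z) = z

/-- A regular point of a curve `X ⊂ ℂᵏ`: some neighborhood of `p` in `X` is the
homeomorphic image of an injective holomorphic map with nowhere-vanishing derivative. -/
def IsRegularPoint {k : ℕ} (X : Set (EuclideanSpace ℂ (Fin k)))
    (p : EuclideanSpace ℂ (Fin k)) : Prop :=
  ∃ (U : Set (EuclideanSpace ℂ (Fin k))) (D : Set ℂ) (γ : ℂ → EuclideanSpace ℂ (Fin k)),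
    IsOpen U ∧ p ∈ U ∧ IsOpen D ∧ DifferentiableOn ℂ γ D ∧ Set.InjOn γ D ∧
    (∀ z ∈ D, deriv γ z ≠ 0) ∧ MapsHomeomorphicallyOnto γ D (X ∩ U)

/-- The set of singular points of `X`. -/
def SingularSet {k : ℕ} (X : Set (EuclideanSpace ℂ (Fin k))) :
    Set (EuclideanSpace ℂ (Fin k)) :=
  {p ∈ X | ¬ IsRegularPoint X p}

/-- `B` is a (smooth) branch through `q` with tangent vector `v`. -/
def IsBranchAt (B : Set (EuclideanSpace ℂ (Fin 2))) (q v : EuclideanSpace ℂ (Fin 2)) : Prop :=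
  ∃ (D : Set ℂ) (γ : ℂ → EuclideanSpace ℂ (Fin 2)) (z₀ : ℂ),
    IsOpen D ∧ z₀ ∈ D ∧ DifferentiableOn ℂ γ D ∧ Set.InjOn γ D ∧
    (∀ z ∈ D, deriv γ z ≠ 0) ∧ MapsHomeomorphicallyOnto γ D B ∧
    γ z₀ = q ∧ deriv γ z₀ = v

/-- `q` is a node of the plane curve `Y`: near `q`, `Y` is the union of two smooth branches
meeting only at `q` with distinct tangent lines. -/
def IsNode (Y : Set (EuclideanSpace ℂ (Fin 2))) (q : EuclideanSpace ℂ (Fin 2)) : Prop :=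
  q ∈ Y ∧ ∃ (U B₁ B₂ : Set (EuclideanSpace ℂ (Fin 2))) (v₁ v₂ : EuclideanSpace ℂ (Fin 2)),
    IsOpen U ∧ q ∈ U ∧ Y ∩ U = B₁ ∪ B₂ ∧ B₁ ∩ B₂ = {q} ∧
    IsBranchAt B₁ q v₁ ∧ IsBranchAt B₂ q v₂ ∧ ∀ c : ℂ, v₂ ≠ c • v₁

/-- The set of points of `ℂ²` having more than one `π`-preimage in `X`. -/
def MultipleSet {n : ℕ} (π : EuclideanSpace ℂ (Fin n) →ₗ[ℂ] EuclideanSpace ℂ (Fin 2))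
    (X : Set (EuclideanSpace ℂ (Fin n))) : Set (EuclideanSpace ℂ (Fin 2)) :=
  {q | ∃ x ∈ X, ∃ y ∈ X, x ≠ y ∧ π x = q ∧ π y = q}

/-- `π` is a generic plane projection for the algebraic curve `X ⊂ ℂⁿ`. -/
def IsGenericPlaneProjection {n : ℕ}
    (π : EuclideanSpace ℂ (Fin n) →ₗ[ℂ] EuclideanSpace ℂ (Fin 2))
    (X : Set (EuclideanSpace ℂ (Fin n))) : Prop :=
  Function.Surjective π ∧
  (∀ K : Set (EuclideanSpace ℂ (Fin 2)), IsCompact K → IsCompact (X ∩ ⇑π ⁻¹' K)) ∧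
  (MultipleSet π X).Finite ∧
  (∀ q ∈ MultipleSet π X, ∃ x y, x ≠ y ∧ {z ∈ X | π z = q} = {x, y} ∧
    IsRegularPoint X x ∧ IsRegularPoint X y) ∧
  (∀ q ∈ MultipleSet π X, IsNode (⇑π '' X) q) ∧
  (∀ p ∈ X, π p ∉ MultipleSet π X →
    ∃ (U : Set (EuclideanSpace ℂ (Fin n))) (V : Set (EuclideanSpace ℂ (Fin 2))),
      IsOpen U ∧ IsOpen V ∧ p ∈ U ∧ π p ∈ V ∧
      IsBiLipschitzOn (⇑π) (X ∩ U) ((⇑π '' X) ∩ V))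

/-- The complex projective plane `ℂP²`. -/
abbrev ProjPlane : Type := Projectivization ℂ (Fin 3 → ℂ)

instance : TopologicalSpace ProjPlane :=
  inferInstanceAs (TopologicalSpace (Quotient (projectivizationSetoid ℂ (Fin 3 → ℂ))))

/-- The embedding `ℂ² → ℂP²`, `(x, y) ↦ (x : y : 1)`. -/
def toProj (p : EuclideanSpace ℂ (Fin 2)) : ProjPlane :=
  Projectivization.mk ℂ ![p 0, p 1, 1] (fun h => by simpa using congrFun h 2)

/-- The line at infinity in `ℂP²`. -/
def lineAtInfinity : Set ProjPlane := {P | P.rep 2 = 0}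

/-- The projective closure of a plane curve `X ⊂ ℂ²`: the topological closure in `ℂP²`. -/
def projClosure (X : Set (EuclideanSpace ℂ (Fin 2))) : Set ProjPlane :=
  closure (toProj '' X)

/-- The germs `(A, p)` and `(B, q)` are (ambient) topologically equivalent. -/
def GermTopEquiv {T : Type*} [TopologicalSpace T] (A : Set T) (p : T) (B : Set T) (q : T) :
    Prop :=
  ∃ (U V : Set T) (φ ψ : T → T),
    IsOpen U ∧ IsOpen V ∧ p ∈ U ∧ q ∈ V ∧
    ContinuousOn φ U ∧ ContinuousOn ψ V ∧ Set.MapsTo φ U V ∧ Set.MapsTo ψ V U ∧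
    (∀ x ∈ U, ψ (φ x) = x) ∧ (∀ y ∈ V, φ (ψ y) = y) ∧
    φ p = q ∧ φ '' (A ∩ U) = B ∩ V

/-- The `i`-th standard affine chart of `ℂP²`. -/
def chart (i : Fin 3) (P : ProjPlane) : EuclideanSpace ℂ (Fin 2) :=
  (EuclideanSpace.equiv (Fin 2) ℂ).symm fun j => P.rep (i.succAbove j) / P.rep i

/-- A regular point of a curve `C ⊂ ℂP²`: read in a standard affine chart, some neighborhood
of `p` in `C` is the homeomorphic image of an injective holomorphic map with
nowhere-vanishing derivative. -/
def IsRegularPointProj (C : Set ProjPlane) (p : ProjPlane) : Prop :=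
  ∃ i : Fin 3, p.rep i ≠ 0 ∧
    ∃ W : Set ProjPlane, IsOpen W ∧ p ∈ W ∧ W ⊆ {P : ProjPlane | P.rep i ≠ 0} ∧
      ∃ (D : Set ℂ) (γ : ℂ → EuclideanSpace ℂ (Fin 2)),
        IsOpen D ∧ DifferentiableOn ℂ γ D ∧ Set.InjOn γ D ∧ (∀ z ∈ D, deriv γ z ≠ 0) ∧
        MapsHomeomorphicallyOnto γ D (chart i '' (C ∩ W))

/-- The set of singular points of a curve `C ⊂ ℂP²`. -/
def SingularSetProj (C : Set ProjPlane) : Set ProjPlane :=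
  {p ∈ C | ¬ IsRegularPointProj C p}

/-- `C` is an irreducible component of the algebraic curve `X`. -/
def IsIrreducibleComponent {k : ℕ} (C X : Set (EuclideanSpace ℂ (Fin k))) : Prop :=
  IsIrreducibleAlgebraicCurve C ∧ C ⊆ X ∧
    ∀ C', IsIrreducibleAlgebraicCurve C' → C' ⊆ X → C ⊆ C' → C' = C

/-- The degree of an algebraic plane curve: the minimal degree of a nonzero polynomial
vanishing identically on it. -/
def curveDegree (X : Set (EuclideanSpace ℂ (Fin 2))) : ℕ :=
  sInf {d | ∃ P : MvPolynomial (Fin 2) ℂ, P ≠ 0 ∧ P.totalDegree = d ∧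
    ∀ x ∈ X, MvPolynomial.eval (fun i => x i) P = 0}

/-!
A polynomial relation between `t` and a bounded function `w` passes to the limit at `t = ∞`, where
it allows only finitely many values of `w`. Since any two algebraic functions on a curve are
algebraically dependent, the points of a curve therefore have only finitely many limiting directions
at infinity, and a linear form `ℓ` vanishing on none of them satisfies `‖x‖ ≤ A * ‖ℓ x‖` far out.
In the same way the differences `x - y` of points with `ℓ x = ℓ y = t` have only finitely many
limiting directions as `t → ∞`, and a second form `m`, vanishing on none of them, satisfies
`‖x - y‖ ≤ C * ‖m (x - y)‖` for such pairs.

For points with `ℓ x ≠ ℓ y` there are two cases. If `ℓ x - ℓ y` is not small compared with `ℓ y`,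
the estimate for `ℓ` suffices. Otherwise `y` can be moved along a branch of the curve to the value
`ℓ x` of `ℓ`: the branches are unramified near infinity, hence holomorphic on a disc around `ℓ y` of
radius proportional to `‖ℓ y‖`, and grow at most linearly there, so by the Schwarz lemma they are
Lipschitz with a constant independent of `y`. The projection is `π = (ℓ, m)`.
-/

section

open Filter Topology Bornology Polynomial Asymptotics
open scoped Polynomial.Bivariate

section Bivariate

theorem evalEval_swap {R : Type*} [CommRing R] (x y : R) (p : R[X][Y]) :
    (Bivariate.swap p).evalEval x y = p.evalEval y x := by
  simpa only [coe_aevalAeval_eq_evalEval] using Bivariate.aevalAeval_swap x y p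

theorem evalEval_reverse_inv_eq_zero_iff {k : Type*} [Field k] (x : k) {y : k} (hy : y ≠ 0)
    (Q : k[X][Y]) : Q.reverse.evalEval x y⁻¹ = 0 ↔ Q.evalEval x y = 0 := by
  have := invertibleOfNonzero hy
  simpa only [eval₂_evalRingHom, invOf_eq_inv] using
    eval₂_reverse_eq_zero_iff (evalRingHom x) y Q

end Bivariate

section AlgebraicOn

variable {α β k : Type*} [Field k] {τ f g : α → k} {s : Set α}

/-- `AlgebraicOn τ f s` means that `f` is an algebraic function of `τ` on `s`: the pairs
`(τ a, f a)` with `a ∈ s` all lie on one plane algebraic curve. The polynomial is only required to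
be nonzero, so it may be free of its second variable. -/
def AlgebraicOn (τ f : α → k) (s : Set α) : Prop :=
  ∃ Q : k[X][Y], Q ≠ 0 ∧ ∀ a ∈ s, Q.evalEval (τ a) (f a) = 0

/-- The evaluation homomorphism `k[X] → k^s`, `p ↦ p ∘ τ`; it makes `k^s` a `k[X]`-algebra over
which `AlgebraicOn τ` becomes Mathlib's `IsAlgebraic`. -/
abbrev evalOnHom (τ : α → k) (s : Set α) : k[X] →+* (s → k) :=
  RingHom.pi fun a : s ↦ evalRingHom (τ a)

theorem algebraicOn_iff_isAlgebraic :
    AlgebraicOn τ f s ↔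
      letI := (evalOnHom τ s).toAlgebra
      IsAlgebraic k[X] (s.domRestrict f) := by
  let := (evalOnHom τ s).toAlgebra
  have aeval_apply (Q : k[X][Y]) (a : s) :
      aeval (s.domRestrict f) Q a = Q.evalEval (τ a) (f a) := by
    rw [← eval₂_evalRingHom, aeval_def]
    exact hom_eval₂ Q _ (Pi.evalRingHom (fun _ : s ↦ k) a) _
  simp only [AlgebraicOn, IsAlgebraic, funext_iff, aeval_apply, Subtype.forall, Pi.zero_apply]

namespace AlgebraicOn

theorem self : AlgebraicOn τ τ s :=
  ⟨Y - C X, X_sub_C_ne_zero _, fun a _ ↦ by simp [evalEval]⟩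

theorem sub (hf : AlgebraicOn τ f s) (hg : AlgebraicOn τ g s) :
    AlgebraicOn τ (fun a ↦ f a - g a) s := by
  let := (evalOnHom τ s).toAlgebra
  rw [algebraicOn_iff_isAlgebraic] at *
  exact IsAlgebraic.sub hf hg

theorem mul (hf : AlgebraicOn τ f s) (hg : AlgebraicOn τ g s) :
    AlgebraicOn τ (fun a ↦ f a * g a) s := by
  let := (evalOnHom τ s).toAlgebra
  rw [algebraicOn_iff_isAlgebraic] at *
  exact IsAlgebraic.mul hf hg

theorem inv (hf : AlgebraicOn τ f s) : AlgebraicOn τ (fun a ↦ (f a)⁻¹) s := by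
  obtain ⟨Q, hQ0, hQ⟩ := hf
  -- The factor `Y` accounts for the convention `0⁻¹ = 0`.
  refine ⟨Y * Q.reverse, mul_ne_zero X_ne_zero (by simpa), fun a ha ↦ ?_⟩
  obtain hfa | hfa := eq_or_ne (f a) 0
  · simp [hfa]
  · rw [evalEval_mul, (evalEval_reverse_inv_eq_zero_iff _ hfa Q).mpr (hQ a ha), mul_zero]

theorem div (hf : AlgebraicOn τ f s) (hg : AlgebraicOn τ g s) :
    AlgebraicOn τ (fun a ↦ f a / g a) s := by
  simpa only [div_eq_mul_inv] using hf.mul hg.inv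

theorem comp_mapsTo {φ : β → α} {t : Set β} (hf : AlgebraicOn τ f s) (hφ : MapsTo φ t s) :
    AlgebraicOn (fun b ↦ τ (φ b)) (fun b ↦ f (φ b)) t :=
  let ⟨Q, hQ0, hQ⟩ := hf
  ⟨Q, hQ0, fun _ hb ↦ hQ _ (hφ hb)⟩

theorem biUnion {ι : Type*} {F : Finset ι} {s : ι → Set α}
    (h : ∀ i ∈ F, AlgebraicOn τ f (s i)) : AlgebraicOn τ f (⋃ i ∈ F, s i) := by
  choose! Q hQ0 hQ using h
  refine ⟨∏ i ∈ F, Q i, Finset.prod_ne_zero_iff.mpr hQ0, fun a ha ↦ ?_⟩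
  obtain ⟨i, hi, ha⟩ := mem_iUnion₂.mp ha
  rw [evalEval_prod]
  exact Finset.prod_eq_zero hi (hQ i hi a ha)

end AlgebraicOn

end AlgebraicOn

section LimitsAtInfinity

variable {𝕜 : Type*} [NormedField 𝕜]

theorem eventually_cobounded_eval_ne_zero {p : 𝕜[X]} (hp : p ≠ 0) :
    ∀ᶠ t in cobounded 𝕜, p.eval t ≠ 0 := by
  classical
  filter_upwards [isBounded_def.mp p.roots.toFinset.finite_toSet.isBounded] with t ht
  simpa [hp] using ht

theorem continuous_evalEval (Q : 𝕜[X][Y]) : Continuous fun z : 𝕜 × 𝕜 ↦ Q.evalEval z.1 z.2 := by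
  simp only [evalEval, eval_eq_sum_range (p := Q), eval_finsetSum, eval_mul, eval_pow, eval_C]
  fun_prop

/-- In `t⁻¹` and `w`, the relation extends continuously to `t = ∞`, where it becomes the equation
given by the leading coefficient in `t`. -/
theorem exists_finset_eventually_near_of_evalEval_eq_zero [ProperSpace 𝕜] {Q : 𝕜[X][Y]}
    (hQ : Q ≠ 0) :
    ∃ S : Finset 𝕜, ∀ B ε : ℝ, 0 < ε → ∀ᶠ t in cobounded 𝕜, ∀ w, ‖w‖ ≤ B →
      Q.evalEval t w = 0 → ∃ c ∈ S, ‖w - c‖ < ε := by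
  classical
  set q := Bivariate.swap Q
  have hq : q.leadingCoeff ≠ 0 := by simpa [q] using hQ
  refine ⟨q.leadingCoeff.roots.toFinset, fun B ε hε ↦ ?_⟩
  set S := q.leadingCoeff.roots.toFinset
  let K : Set 𝕜 := closedBall 0 B ∩ ⋂ c ∈ S, (ball c ε)ᶜ
  have hK : IsCompact K := (isCompact_closedBall 0 B).inter_right <|
    isClosed_biInter fun c _ ↦ isOpen_ball.isClosed_compl
  have reverse_ne_zero : ∀ᶠ z in 𝓝 0, ∀ w ∈ K, q.reverse.evalEval w z ≠ 0 := by
    refine hK.eventually_forall_of_forall_eventually fun w hw ↦ ?_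
    refine ((continuous_evalEval q.reverse).comp continuous_swap).continuousAt.eventually_ne ?_
    have hwS : w ∉ S := fun h ↦ mem_iInter₂.mp hw.2 w h (mem_ball_self hε)
    simpa [evalEval, ← coeff_zero_eq_eval_zero, S, hq] using hwS
  filter_upwards [tendsto_inv₀_cobounded.eventually reverse_ne_zero,
    (eventually_cobounded_eval_ne_zero X_ne_zero : ∀ᶠ t : 𝕜 in cobounded 𝕜, _)]
    with t ht ht0 w hwB hQw
  by_contra! hwS
  refine ht w ⟨by simpa using hwB, by simpa [dist_eq_norm] using hwS⟩ ?_
  rwa [evalEval_reverse_inv_eq_zero_iff _ (by simpa using ht0), evalEval_swap]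

end LimitsAtInfinity

section Directions

theorem exists_pos_forall_mem_ball_le_norm {E F : Type*} [PseudoMetricSpace E]
    [NormedAddCommGroup F] {f : E → F} (hf : Continuous f) {L : Finset E}
    (hL : ∀ w ∈ L, f w ≠ 0) : ∃ δ > 0, ∀ w ∈ L, ∀ u ∈ ball w δ, δ ≤ ‖f u‖ := by
  have near (w) (hw : w ∈ L) : ∀ᶠ δ in 𝓝[>] (0 : ℝ), ∀ u ∈ ball w δ, δ ≤ ‖f u‖ := by
    have hfw : 0 < ‖f w‖ := norm_pos_iff.mpr (hL w hw)
    obtain ⟨ε, hε, hball⟩ := eventually_nhds_iff_ball.mp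
      (hf.norm.continuousAt.eventually_const_lt (half_lt_self hfw))
    filter_upwards [nhdsWithin_le_nhds (eventually_lt_nhds hε),
      nhdsWithin_le_nhds (eventually_lt_nhds (half_pos hfw))] with δ hδε hδf u hu
    exact hδf.le.trans (hball u (ball_subset_ball hδε.le hu)).le
  obtain ⟨δ, hδ, hδ0⟩ := (((Finset.eventually_all L).mpr near).and self_mem_nhdsWithin).exists
  exact ⟨δ, hδ0, hδ⟩

variable {𝕜 α ι F : Type*} [NormedField 𝕜] [ProperSpace 𝕜] [Fintype ι]
  [NormedAddCommGroup F] [NormedSpace 𝕜 F] {v : α → ι → 𝕜} {s : Set α}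

theorem exists_finset_eventually_smul_near {σ : α → 𝕜} {j : ι}
    (h : ∀ i, AlgebraicOn σ (fun a ↦ v a i / v a j) s) :
    ∃ L : Finset (ι → 𝕜), 0 ∉ L ∧ ∀ ε > 0, ∀ᶠ a in comap σ (cobounded 𝕜) ⊓ 𝓟 s,
      v a ≠ 0 → ‖v a‖ ≤ ‖v a j‖ → ∃ w ∈ L, ‖(v a j)⁻¹ • v a - w‖ < ε := by
  classical
  choose Q hQ0 hQ using h
  choose S hS using fun i ↦ exists_finset_eventually_near_of_evalEval_eq_zero (hQ0 i)
  refine ⟨(Fintype.piFinset S).erase 0, Finset.notMem_erase _ _, fun ε hε ↦ ?_⟩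
  have coord_near : ∀ᶠ t in cobounded 𝕜, ∀ i w, ‖w‖ ≤ 1 → (Q i).evalEval t w = 0 →
      ∃ c ∈ S i, ‖w - c‖ < min ε 1 :=
    eventually_all.mpr fun i ↦ hS i 1 _ (lt_min hε one_pos)
  rw [eventually_inf_principal]
  filter_upwards [tendsto_comap.eventually coord_near] with a hnear ha hva hmax
  have hvj : 0 < ‖v a j‖ := (norm_pos_iff.mpr hva).trans_le hmax
  have hcoord (i) : ∃ c ∈ S i, ‖((v a j)⁻¹ • v a) i - c‖ < min ε 1 := by
    rw [Pi.smul_apply, smul_eq_mul, inv_mul_eq_div]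
    refine hnear i _ ?_ (hQ i a ha)
    rw [norm_div]
    exact div_le_one_of_le₀ ((norm_le_pi_norm _ i).trans hmax) (norm_nonneg _)
  choose c hcS hc using hcoord
  have hdist : ‖(v a j)⁻¹ • v a - c‖ < min ε 1 :=
    (pi_norm_lt_iff (lt_min hε one_pos)).mpr hc
  refine ⟨c, Finset.mem_erase.mpr ⟨?_, Fintype.mem_piFinset.mpr hcS⟩,
    hdist.trans_le (min_le_left _ _)⟩
  rintro rfl
  refine (hdist.trans_le (min_le_right _ _)).not_ge ?_
  simpa [hvj.ne', norm_pos_iff.mp hvj] using norm_le_pi_norm ((v a j)⁻¹ • v a) j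

theorem exists_finset_forall_isBigO [Nonempty ι] {τ : ι → α → 𝕜} {l : Filter α} (hl : l ≤ 𝓟 s)
    (hτ : ∀ j, Tendsto (τ j) (l ⊓ 𝓟 {a | ‖v a‖ ≤ ‖v a j‖}) (cobounded 𝕜))
    (h : ∀ i j, AlgebraicOn (τ j) (fun a ↦ v a i / v a j) s) :
    ∃ L : Finset (ι → 𝕜), 0 ∉ L ∧
      ∀ ℓ : (ι → 𝕜) →L[𝕜] F, (∀ w ∈ L, ℓ w ≠ 0) → v =O[l] fun a ↦ ℓ (v a) := by
  classical
  choose L hL0 hL using fun j ↦ exists_finset_eventually_smul_near fun i ↦ h i j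
  refine ⟨Finset.univ.biUnion L, by simpa using hL0, fun ℓ hℓ ↦ ?_⟩
  obtain ⟨δ, hδ, hball⟩ := exists_pos_forall_mem_ball_le_norm ℓ.continuous hℓ
  have near : ∀ᶠ a in l, ∀ j, ‖v a‖ ≤ ‖v a j‖ → v a ≠ 0 →
      ∃ w ∈ L j, ‖(v a j)⁻¹ • v a - w‖ < δ := by
    refine eventually_all.mpr fun j ↦ eventually_inf_principal.mp ?_
    filter_upwards [le_inf (hτ j).le_comap (inf_le_left.trans hl) (hL j δ hδ),
      mem_inf_of_right (mem_principal_self _)] with a ha hmax hva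
    exact ha hva hmax
  refine .of_bound δ⁻¹ ?_
  filter_upwards [near] with a ha
  obtain hva | hva := eq_or_ne (v a) 0
  · simp [hva]
  obtain ⟨j, hj⟩ := Finite.exists_max fun i ↦ ‖v a i‖
  have hmax : ‖v a‖ ≤ ‖v a j‖ := (pi_norm_le_iff_of_nonempty _).mpr hj
  obtain ⟨w, hwL, hw⟩ := ha j hmax hva
  have hδle := hball w (Finset.mem_biUnion.mpr ⟨j, Finset.mem_univ j, hwL⟩) _
    (mem_ball_iff_norm.mpr hw)
  rw [map_smul, norm_smul, norm_inv,
    le_inv_mul_iff₀ ((norm_pos_iff.mpr hva).trans_le hmax), mul_comm] at hδle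
  exact hmax.trans ((le_inv_mul_iff₀ hδ).mpr hδle)

theorem exists_dual_isBigO {𝕜 : Type*} [NontriviallyNormedField 𝕜] [ProperSpace 𝕜]
    {v : α → ι → 𝕜} {τ : ι → α → 𝕜} {l : Filter α} (hl : l ≤ 𝓟 s)
    (hτ : ∀ j, Tendsto (τ j) (l ⊓ 𝓟 {a | ‖v a‖ ≤ ‖v a j‖}) (cobounded 𝕜))
    (h : ∀ i j, AlgebraicOn (τ j) (fun a ↦ v a i / v a j) s) {w : ι → 𝕜} (hw : w ≠ 0) :
    ∃ ℓ : (ι → 𝕜) →L[𝕜] 𝕜, ℓ w ≠ 0 ∧ v =O[l] fun a ↦ ℓ (v a) := by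
  classical
  have : Nonempty ι := (Function.ne_iff.mp hw).nonempty
  obtain ⟨L, hL0, hL⟩ := exists_finset_forall_isBigO (F := 𝕜) hl hτ h
  have hne : ∀ u ∈ insert w L, u ≠ 0 := by simp [hw, hL0]
  obtain ⟨ℓ, hℓ⟩ := Module.exists_dual_forall_apply_ne_zero (K := 𝕜)
    (fun u : {u // u ∈ insert w L} ↦ (u : ι → 𝕜)) fun u ↦ hne u u.2
  exact ⟨ℓ.toContinuousLinearMap, hℓ ⟨w, Finset.mem_insert_self w L⟩,
    hL _ fun u hu ↦ hℓ ⟨u, Finset.mem_insert_of_mem hu⟩⟩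

end Directions

section CoveringSections

theorem isLocalHomeomorphOn_preimage_of_nhds_le {E B : Type*} [TopologicalSpace E]
    [TopologicalSpace B] {f : E → B} {s : Set B} (hf : Continuous f) (hs : IsOpen s)
    (hinj : ∀ e ∈ f ⁻¹' s, ∃ U ∈ 𝓝 e, InjOn f U)
    (hnhds : ∀ e ∈ f ⁻¹' s, 𝓝 (f e) ≤ map f (𝓝 e)) : IsLocalHomeomorphOn f (f ⁻¹' s) := by
  rw [isLocalHomeomorphOn_iff_isOpenEmbedding_restrict]
  intro e he
  obtain ⟨U, hU, hUinj⟩ := hinj e he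
  have hV : IsOpen (interior U ∩ f ⁻¹' s) := isOpen_interior.inter (hs.preimage hf)
  refine ⟨interior U ∩ f ⁻¹' s, hV.mem_nhds ⟨mem_interior_iff_mem_nhds.mpr hU, he⟩,
    .of_continuous_injective_isOpenMap (hf.comp continuous_subtype_val) ?_ ?_⟩
  · exact injOn_iff_injective.mp (hUinj.mono (inter_subset_left.trans interior_subset))
  · refine IsOpenMap.of_nhds_le fun x ↦ ?_
    rw [domRestrict_eq, ← Filter.map_map, map_nhds_subtype_coe_eq_nhds x.2 (hV.mem_nhds x.2)]
    exact hnhds x x.2.2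

variable {B F : Type*} [TopologicalSpace B] [TopologicalSpace F] {Z : Set (B × F)} {s : Set B}

theorem isLocalHomeomorphOn_fst_of_local_graph (hs : IsOpen s)
    (hZ : ∀ p ∈ Z, p.1 ∈ s → ∃ ψ : B → F, ContinuousAt ψ p.1 ∧
      ∀ᶠ q in 𝓝 p, q ∈ Z ↔ ψ q.1 = q.2) :
    IsLocalHomeomorphOn (fun p : Z ↦ p.1.1) ((fun p : Z ↦ p.1.1) ⁻¹' s) := by
  refine isLocalHomeomorphOn_preimage_of_nhds_le (by fun_prop) hs ?_ ?_
  · rintro p hp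
    obtain ⟨ψ, -, hψZ⟩ := hZ p p.2 hp
    refine ⟨_, continuous_subtype_val.continuousAt.preimage_mem_nhds hψZ,
      fun q hq q' hq' hqq' ↦ Subtype.ext (Prod.ext hqq' ?_)⟩
    rw [← (hq.mp q.2 : ψ q.1.1 = _), ← (hq'.mp q'.2 : ψ q'.1.1 = _)]
    exact congrArg ψ hqq'
  · rintro p hp
    obtain ⟨ψ, hψ, hψZ⟩ := hZ p p.2 hp
    have hψp : ψ p.1.1 = p.1.2 := hψZ.self_of_nhds.mp p.2
    have hgraph : Tendsto (fun x ↦ (x, ψ x)) (𝓝 p.1.1) (𝓝 p.1) := by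
      have := continuousAt_id.prodMk hψ
      rwa [ContinuousAt, hψp] at this
    intro V hV
    obtain ⟨W, hW, hWV⟩ := mem_nhds_subtype _ _ _ |>.mp hV
    filter_upwards [hgraph.eventually hψZ, hgraph hW] with x hxZ hxW
    exact hWV (show (⟨(x, ψ x), hxZ.mpr rfl⟩ : Z) ∈ _ from hxW)

theorem exists_continuousOn_section_of_isCompact [T2Space B] [T2Space F] (hcompact : IsCompact Z)
    (hs : IsOpen s) [SimplyConnectedSpace s] [LocallyPathConnectedSpace s]
    (hZ : ∀ p ∈ Z, p.1 ∈ s → ∃ ψ : B → F, ContinuousAt ψ p.1 ∧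
      ∀ᶠ q in 𝓝 p, q ∈ Z ↔ ψ q.1 = q.2)
    {p₀ : B × F} (hp₀ : p₀ ∈ Z) (hp₀s : p₀.1 ∈ s) :
    ∃ g : B → F, ContinuousOn g s ∧ g p₀.1 = p₀.2 ∧ ∀ x ∈ s, (x, g x) ∈ Z := by
  have := isCompact_iff_compactSpace.mp hcompact
  have hcov : IsCoveringMapOn (fun p : Z ↦ p.1.1) s :=
    .of_isLocalHomeomorphOn (by fun_prop) (isLocalHomeomorphOn_fst_of_local_graph hs hZ)
  obtain ⟨G, ⟨hG₀, hG⟩, -⟩ := hcov.existsUnique_continuousMap_lifts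
    ⟨Subtype.val, continuous_subtype_val⟩ (a₀ := ⟨p₀.1, hp₀s⟩) (e₀ := ⟨p₀, hp₀⟩) rfl Subtype.prop
  have hG_fst (x : s) : (G x).1.1 = x := congrFun hG x
  let g : B → F := Function.extend Subtype.val (fun x : s ↦ (G x).1.2) fun _ ↦ p₀.2
  have hg (x : s) : g x = (G x).1.2 := Subtype.val_injective.extend_apply _ _ x
  refine ⟨g, ?_, ?_, fun x hx ↦ ?_⟩
  · rw [continuousOn_iff_continuous_domRestrict, domRestrict_eq, (funext hg : g ∘ Subtype.val = _)]
    fun_prop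
  · rw [hg ⟨p₀.1, hp₀s⟩, hG₀]
  · rw [hg ⟨x, hx⟩]
    convert (G ⟨x, hx⟩).2
    exact (hG_fst ⟨x, hx⟩).symm

end CoveringSections

section Branches

variable {𝕜 : Type*} [RCLike 𝕜] {Q : 𝕜[X][Y]}

theorem hasDerivAt_evalEval (Q : 𝕜[X][Y]) (t u : 𝕜) :
    HasDerivAt (fun u ↦ Q.evalEval t u) (Q.derivative.evalEval t u) u := by
  simpa only [derivative_map, map_evalRingHom_eval] using (Q.map (evalRingHom t)).hasDerivAt u

theorem contDiff_evalEval (Q : 𝕜[X][Y]) : ContDiff 𝕜 1 fun z : 𝕜 × 𝕜 ↦ Q.evalEval z.1 z.2 := by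
  simp only [evalEval, eval_eq_sum_range (p := Q), eval_finsetSum, eval_mul, eval_pow, eval_C]
  exact ContDiff.sum fun k _ ↦ (ContDiff.comp
    (by simpa using Polynomial.contDiff_aeval (𝕜 := 𝕜) (Q.coeff k) 1) contDiff_fst).mul
    (contDiff_snd.pow _)

theorem exists_implicit_root {p : 𝕜 × 𝕜} (hQ : Q.evalEval p.1 p.2 = 0)
    (hQ' : Q.derivative.evalEval p.1 p.2 ≠ 0) :
    ∃ ψ : 𝕜 → 𝕜, DifferentiableAt 𝕜 ψ p.1 ∧
      ∀ᶠ q in 𝓝 p, Q.evalEval q.1 q.2 = 0 ↔ ψ q.1 = q.2 := by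
  have hF := (contDiff_evalEval Q).contDiffAt.hasStrictFDerivAt (x := p) one_ne_zero
  set F' := fderiv 𝕜 (fun z : 𝕜 × 𝕜 ↦ Q.evalEval z.1 z.2) p
  have hF'_snd : (F' ∘L .inr 𝕜 𝕜 𝕜) 1 = Q.derivative.evalEval p.1 p.2 :=
    (hF.hasFDerivAt.comp_hasDerivAt (f := fun u ↦ (p.1, u)) p.2
      ((hasDerivAt_const p.2 p.1).prodMk (hasDerivAt_id p.2))).unique (hasDerivAt_evalEval Q _ _)
  have hinv : (F' ∘L .inr 𝕜 𝕜 𝕜).IsInvertible :=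
    ⟨.unitsEquivAut 𝕜 (Units.mk0 _ (hF'_snd ▸ hQ')), by ext; simp⟩
  refine ⟨hF.implicitFunctionOfProdDomain hinv,
    (hF.hasStrictFDerivAt_implicitFunctionOfProdDomain hinv).hasFDerivAt.differentiableAt, ?_⟩
  simpa only [hQ] using hF.eventually_apply_eq_iff_implicitFunctionOfProdDomain hinv

theorem differentiableAt_of_evalEval_eq_zero {u : 𝕜 → 𝕜} {t : 𝕜} (hu : ContinuousAt u t)
    (hQ : ∀ᶠ z in 𝓝 t, Q.evalEval z (u z) = 0) (hQ' : Q.derivative.evalEval t (u t) ≠ 0) :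
    DifferentiableAt 𝕜 u t := by
  obtain ⟨ψ, hψ, hiff⟩ := exists_implicit_root (p := (t, u t)) hQ.self_of_nhds hQ'
  refine hψ.congr_of_eventuallyEq ?_
  filter_upwards [hQ, (continuousAt_id.prodMk hu).eventually hiff] with z hz hz'
  exact (hz'.mp hz).symm

theorem exists_differentiableOn_root {t₀ u₀ : 𝕜} {ρ N : ℝ} (hρ : 0 < ρ)
    (hsimple : ∀ t ∈ ball t₀ ρ, ∀ u, Q.evalEval t u = 0 → Q.derivative.evalEval t u ≠ 0)
    (hgap : ∀ t ∈ ball t₀ ρ, ∀ u, Q.evalEval t u = 0 → ‖u‖ ≠ N)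
    (hu₀ : Q.evalEval t₀ u₀ = 0) (hu₀N : ‖u₀‖ ≤ N) :
    ∃ u : 𝕜 → 𝕜, DifferentiableOn 𝕜 u (ball t₀ ρ) ∧ u t₀ = u₀ ∧
      ∀ t ∈ ball t₀ ρ, Q.evalEval t (u t) = 0 ∧ ‖u t‖ ≤ N := by
  let Z : Set (𝕜 × 𝕜) :=
    closedBall t₀ ρ ×ˢ closedBall 0 N ∩ {p | Q.evalEval p.1 p.2 = 0}
  have hZ : IsCompact Z := ((isCompact_closedBall _ _).prod (isCompact_closedBall _ _)).inter_right
    (isClosed_eq (continuous_evalEval Q) continuous_const)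
  have local_graph : ∀ p ∈ Z, p.1 ∈ ball t₀ ρ → ∃ ψ : 𝕜 → 𝕜, ContinuousAt ψ p.1 ∧
      ∀ᶠ q in 𝓝 p, q ∈ Z ↔ ψ q.1 = q.2 := by
    rintro p ⟨⟨-, hpN⟩, hpQ⟩ hpρ
    obtain ⟨ψ, hψ, hiff⟩ := exists_implicit_root hpQ (hsimple _ hpρ _ hpQ)
    refine ⟨ψ, hψ.continuousAt, ?_⟩
    have hpN' : p.2 ∈ ball 0 N := mem_ball_zero_iff.mpr <|
      (mem_closedBall_zero_iff.mp hpN).lt_of_ne (hgap _ hpρ _ hpQ)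
    filter_upwards [hiff, (isOpen_ball.prod isOpen_ball).mem_nhds ⟨hpρ, hpN'⟩] with q hq hqball
    rw [← hq]
    exact and_iff_right (prod_mono ball_subset_closedBall ball_subset_closedBall hqball)
  have := (convex_ball t₀ ρ).contractibleSpace ⟨t₀, mem_ball_self hρ⟩
  have := (isOpen_ball (x := t₀) (ε := ρ)).locallyPathConnectedSpace
  obtain ⟨u, hu, hut₀, huZ⟩ := exists_continuousOn_section_of_isCompact hZ isOpen_ball local_graph
    (p₀ := (t₀, u₀)) ⟨⟨mem_closedBall_self hρ.le, mem_closedBall_zero_iff.mpr hu₀N⟩, hu₀⟩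
    (mem_ball_self hρ)
  refine ⟨u, fun t ht ↦ ?_, hut₀,
    fun t ht ↦ ⟨(huZ t ht).2, mem_closedBall_zero_iff.mp (huZ t ht).1.2⟩⟩
  have hball := isOpen_ball.mem_nhds ht
  exact (differentiableAt_of_evalEval_eq_zero (hu.continuousAt hball)
    (eventually_of_mem hball fun z hz ↦ (huZ z hz).2)
    (hsimple t ht _ (huZ t ht).2)).differentiableWithinAt

end Branches

section RootsAtInfinity

theorem exists_mul_add_mul_derivative_eq_C {R : Type*} [CommRing R] [IsDomain R]
    [NormalizedGCDMonoid R] [CharZero R] {Q : R[X]} (hQ : Irreducible Q) (hdeg : Q.natDegree ≠ 0) :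
    ∃ d ≠ 0, ∃ a b : R[X], a * Q + b * derivative Q = C d := by
  let K := FractionRing R
  have : CharZero K := charZero_of_injective_algebraMap (IsFractionRing.injective R K)
  obtain ⟨a, b, hab⟩ : (Q.map (algebraMap R K)).Separable :=
    ((hQ.isPrimitive hdeg).irreducible_iff_irreducible_map_fraction_map.mp hQ).separable
  obtain ⟨da, hda, ha⟩ := IsLocalization.integerNormalization_spec (nonZeroDivisors R) a
  obtain ⟨db, hdb, hb⟩ := IsLocalization.integerNormalization_spec (nonZeroDivisors R) b
  refine ⟨da * db, mul_ne_zero (nonZeroDivisors.ne_zero hda) (nonZeroDivisors.ne_zero hdb),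
    C db * IsLocalization.integerNormalization (nonZeroDivisors R) a,
    C da * IsLocalization.integerNormalization (nonZeroDivisors R) b,
    Polynomial.map_injective _ (IsFractionRing.injective R K) ?_⟩
  simp only [Polynomial.map_add, Polynomial.map_mul, Polynomial.map_C, ha, hb,
    ← derivative_map, Algebra.smul_def, map_mul, Polynomial.algebraMap_apply]
  linear_combination C (algebraMap R K da) * C (algebraMap R K db) * hab

theorem eventually_cobounded_derivative_evalEval_ne_zero {𝕜 : Type*} [NormedField 𝕜] [CharZero 𝕜]
    {Q : 𝕜[X][Y]} (hQ : Irreducible Q) :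
    ∀ᶠ t in cobounded 𝕜, ∀ u, Q.evalEval t u = 0 → Q.derivative.evalEval t u ≠ 0 := by
  by_cases hdeg : Q.natDegree = 0
  · obtain ⟨q, rfl⟩ := natDegree_eq_zero.mp hdeg
    filter_upwards [eventually_cobounded_eval_ne_zero (C_ne_zero.mp hQ.ne_zero)] with t ht u hu
    exact absurd (evalEval_C t u q ▸ hu) ht
  · let : NormalizedGCDMonoid 𝕜[X] := Nonempty.some inferInstance
    obtain ⟨d, hd, a, b, hab⟩ := exists_mul_add_mul_derivative_eq_C hQ hdeg
    filter_upwards [eventually_cobounded_eval_ne_zero hd] with t ht u hu hu'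
    refine ht ?_
    rw [← evalEval_C t u, ← hab, evalEval_add, evalEval_mul, evalEval_mul, hu, hu', mul_zero,
      mul_zero, add_zero]

theorem exists_eventually_cobounded_norm_lt_mul {𝕜 : Type*} [NormedField 𝕜] [ProperSpace 𝕜]
    {Q : 𝕜[X][Y]} (hQ : Q ≠ 0) (M₀ : ℝ) :
    ∃ M ≥ M₀, 0 < M ∧ ∀ᶠ t in cobounded 𝕜, ∀ u, Q.evalEval t u = 0 →
      ‖u‖ ≤ 2 * M * ‖t‖ → ‖u‖ < M * ‖t‖ := by
  have hslope : AlgebraicOn Prod.fst (fun p : 𝕜 × 𝕜 ↦ p.2 / p.1) {p | Q.evalEval p.1 p.2 = 0} :=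
    .div ⟨Q, hQ, fun _ h ↦ h⟩ .self
  obtain ⟨P, hP, hPQ⟩ := hslope
  obtain ⟨S, hS⟩ := exists_finset_eventually_near_of_evalEval_eq_zero hP
  obtain ⟨M, ⟨hM₀, hM⟩, hSM⟩ := ((eventually_ge_atTop M₀).and (eventually_gt_atTop 0)).and
    ((Finset.eventually_all S).mpr fun c _ ↦ eventually_ge_atTop (‖c‖ + 1)) |>.exists
  refine ⟨M, hM₀, hM, ?_⟩
  filter_upwards [hS (2 * M) 1 one_pos, eventually_ne_cobounded 0] with t ht ht₀ u hu huM
  have ht₀ := norm_pos_iff.mpr ht₀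
  obtain ⟨c, hcS, hc⟩ := ht (u / t) (by rwa [norm_div, div_le_iff₀ ht₀]) (hPQ (t, u) hu)
  have hlt : ‖u / t‖ < M := by linarith [norm_sub_norm_le (u / t) c, hSM c hcS]
  rwa [norm_div, div_lt_iff₀ ht₀] at hlt

theorem eventually_cobounded_forall_mem_ball {E : Type*} [SeminormedAddCommGroup E] {p : E → Prop}
    {c : ℝ} (hc : c < 1) (h : ∀ᶠ x in cobounded E, p x) :
    ∀ᶠ x in cobounded E, ∀ z ∈ ball x (c * ‖x‖), p z := by
  obtain ⟨R, -, hR⟩ := hasBasis_cobounded_norm.eventually_iff.mp h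
  filter_upwards [tendsto_norm_cobounded_atTop.const_mul_atTop (sub_pos.mpr hc)
    |>.eventually_ge_atTop R] with x hx z hz
  refine hR (show R ≤ ‖z‖ from ?_)
  linarith [norm_sub_norm_le x z, mem_ball_iff_norm'.mp hz]

/-- Lipschitz dependence at infinity of the roots of size `O(t)` on the parameter `t`: a root `u₀`
over `t₀` extends to nearby parameters with `‖u - u₀‖ ≤ C * ‖t - t₀‖`. The range `‖t₀‖ / 4` of
parameters is proportional to `‖t₀‖`, so that it covers any two points that are close relative to
their height. -/
def RootsLipschitzAtInfinity (Q : ℂ[X][Y]) : Prop :=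
  ∀ M : ℝ, ∃ C : ℝ, ∀ᶠ t₀ in cobounded ℂ, ∀ t u₀, ‖t - t₀‖ < ‖t₀‖ / 4 → ‖u₀‖ ≤ M * ‖t₀‖ →
    Q.evalEval t₀ u₀ = 0 → ∃ u, Q.evalEval t u = 0 ∧ ‖u - u₀‖ ≤ C * ‖t - t₀‖

namespace RootsLipschitzAtInfinity

variable {P Q : ℂ[X][Y]}

theorem of_isUnit (hQ : IsUnit Q) : RootsLipschitzAtInfinity Q := by
  refine fun M ↦ ⟨0, .of_forall fun t₀ t u₀ _ _ hu₀ ↦ ?_⟩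
  exact absurd hu₀ (hQ.map (evalEvalRingHom t₀ u₀)).ne_zero

theorem mul (hP : RootsLipschitzAtInfinity P) (hQ : RootsLipschitzAtInfinity Q) :
    RootsLipschitzAtInfinity (P * Q) := by
  intro M
  obtain ⟨C, hC⟩ := hP M
  obtain ⟨C', hC'⟩ := hQ M
  refine ⟨max C C', ?_⟩
  filter_upwards [hC, hC'] with t₀ h h' t u₀ ht hu₀M hu₀
  rw [evalEval_mul, mul_eq_zero] at hu₀
  obtain hu₀ | hu₀ := hu₀
  · obtain ⟨u, hu, hle⟩ := h t u₀ ht hu₀M hu₀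
    exact ⟨u, by rw [evalEval_mul, hu, zero_mul], hle.trans (by gcongr; exact le_max_left ..)⟩
  · obtain ⟨u, hu, hle⟩ := h' t u₀ ht hu₀M hu₀
    exact ⟨u, by rw [evalEval_mul, hu, mul_zero], hle.trans (by gcongr; exact le_max_right ..)⟩

/-- For large `t` the roots are simple and none has size comparable to `M * ‖t‖`, so a root below
this gap extends to a holomorphic function of the same size on a disc of radius `‖t₀‖ / 3`; the
Schwarz lemma then bounds its increments. -/
theorem of_irreducible (hQ : Irreducible Q) : RootsLipschitzAtInfinity Q := by
  intro M₀
  obtain ⟨M, hM₀, hM, hgap⟩ := exists_eventually_cobounded_norm_lt_mul hQ.ne_zero M₀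
  refine ⟨12 * M, ?_⟩
  filter_upwards [eventually_cobounded_forall_mem_ball (by norm_num : (1 / 3 : ℝ) < 1)
      ((eventually_cobounded_derivative_evalEval_ne_zero hQ).and hgap),
    eventually_ne_cobounded 0] with t₀ hball ht₀ t u₀ ht hu₀M hu₀
  replace ht₀ := norm_pos_iff.mpr ht₀
  set ρ := 1 / 3 * ‖t₀‖ with hρ
  have hMt₀ : 0 < M * ‖t₀‖ := mul_pos hM ht₀
  have hρ₀ : 0 < ρ := by positivity
  have gap : ∀ z ∈ ball t₀ ρ, ∀ u, Q.evalEval z u = 0 → ‖u‖ ≠ 4 / 3 * M * ‖t₀‖ := by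
    intro z hz u hu hnorm
    have hz' := mem_ball_iff_norm.mp hz
    have hz_lower : 2 / 3 * ‖t₀‖ ≤ ‖z‖ := by linarith [norm_sub_norm_le t₀ z, norm_sub_rev t₀ z]
    have hz_upper : ‖z‖ ≤ 4 / 3 * ‖t₀‖ := by linarith [norm_sub_norm_le z t₀]
    have hlt : ‖u‖ < M * ‖z‖ := (hball z hz).2 u hu (by rw [hnorm]; nlinarith)
    nlinarith
  obtain ⟨u, hu, hut₀, hroot⟩ := exists_differentiableOn_root hρ₀
    (fun z hz ↦ (hball z hz).1) gap hu₀ (by nlinarith)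
  have htball : t ∈ ball t₀ ρ := mem_ball_iff_norm.mpr (by linarith)
  have hmaps : MapsTo u (ball t₀ ρ) (closedBall (u t₀) (4 * M * ‖t₀‖)) := fun z hz ↦ by
    rw [mem_closedBall_iff_norm]
    linarith [norm_sub_le (u z) (u t₀), (hroot z hz).2, (hroot t₀ (mem_ball_self hρ₀)).2]
  refine ⟨u t, (hroot t htball).1, ?_⟩
  have schwarz := Complex.dist_le_div_mul_dist_of_mapsTo_ball hu hmaps htball
  have hslope : 4 * M * ‖t₀‖ / ρ = 12 * M := by rw [hρ]; field_simp; norm_num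
  rwa [dist_eq_norm, dist_eq_norm, hut₀, hslope] at schwarz

theorem of_ne_zero (hQ : Q ≠ 0) : RootsLipschitzAtInfinity Q := by
  induction Q using WfDvdMonoid.induction_on_irreducible with
  | zero => exact absurd rfl hQ
  | unit v hv => exact of_isUnit hv
  | mul a i ha hi ih => exact (of_irreducible hi).mul (ih ha)

end RootsLipschitzAtInfinity

end RootsAtInfinity

section CoordinateRing

theorem dimensionLEOne_of_isIntegral {A B : Type*} [CommRing A] [CommRing B] [Algebra A B]
    [FaithfulSMul A B] [Algebra.IsIntegral A B] [Ring.DimensionLEOne B] :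
    Ring.DimensionLEOne A := by
  refine ⟨fun {p} hp hp_prime ↦ ?_⟩
  have hbot : (⊥ : Ideal B).comap (algebraMap A B) = ⊥ :=
    Ideal.comap_bot_of_injective _ (FaithfulSMul.algebraMap_injective A B)
  obtain ⟨q, -, hq_prime, rfl⟩ :=
    Ideal.exists_ideal_over_prime_of_isIntegral p (⊥ : Ideal B) (hbot.trans_le bot_le)
  have hq : q ≠ ⊥ := by
    rintro rfl
    exact hp hbot
  have := hq_prime.isMaximal hq
  exact Ideal.isMaximal_comap_of_isIntegral_of_isMaximal q

theorem trdeg_le_one_of_dimensionLEOne (k A : Type*) [Field k] [CommRing A] [IsDomain A]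
    [Algebra k A] [Algebra.FiniteType k A] [Ring.DimensionLEOne A] : Algebra.trdeg k A ≤ 1 := by
  obtain ⟨s, g, hg, hgi⟩ := exists_integral_inj_algHom_of_fg k A
  algebraize [g.toRingHom]
  have : IsScalarTower k (MvPolynomial (Fin s) k) A := .of_algebraMap_eq fun x ↦ (g.commutes x).symm
  have : FaithfulSMul (MvPolynomial (Fin s) k) A :=
    (faithfulSMul_iff_algebraMap_injective _ _).mpr hg
  have : Ring.DimensionLEOne (MvPolynomial (Fin s) k) := dimensionLEOne_of_isIntegral (B := A)
  have hs : s ≤ 1 := by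
    have hdim : ringKrullDim (MvPolynomial (Fin s) k) ≤ 1 := Ring.krullDimLE_iff.mp inferInstance
    rw [MvPolynomial.ringKrullDim_of_isNoetherianRing, ringKrullDim_eq_zero_of_field, zero_add,
      Nat.card_fin] at hdim
    exact_mod_cast hdim
  have hbasis := (IsTranscendenceBasis.mvPolynomial (Fin s) k).algebraMap_comp (A := A)
  have htrdeg := hbasis.lift_cardinalMk_eq_trdeg
  rw [Cardinal.mk_fin, Cardinal.lift_natCast, eq_comm, Cardinal.lift_eq_nat_iff] at htrdeg
  rw [htrdeg]
  exact_mod_cast hs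

theorem evalEval_symm_equivMvPolynomial {R : Type*} [CommRing R] (P : MvPolynomial (Fin 2) R)
    (a b : R) : ((Bivariate.equivMvPolynomial R).symm P).evalEval a b
      = MvPolynomial.aeval ![a, b] P := by
  have : (aevalAeval a b).comp (Bivariate.equivMvPolynomial R).symm.toAlgHom
      = MvPolynomial.aeval ![a, b] := by
    ext i
    fin_cases i <;> simp
  rw [← coe_aevalAeval_eq_evalEval, ← this]
  rfl

variable {k σ : Type*} [Field k] {Z : Set (σ → k)}

theorem isPrime_vanishingIdeal (hinf : Z.Infinite)
    (hfin : ∀ p : MvPolynomial σ k, (∃ z ∈ Z, MvPolynomial.aeval z p ≠ 0) →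
      {z ∈ Z | MvPolynomial.aeval z p = 0}.Finite) :
    (MvPolynomial.vanishingIdeal k Z).IsPrime where
  ne_top' h := by
    obtain ⟨z, hz⟩ := hinf.nonempty
    simpa using (Ideal.eq_top_iff_one _).mp h z hz
  mem_or_mem' {p q} hpq := by
    by_contra! hne
    simp only [MvPolynomial.mem_vanishingIdeal_iff, not_forall, ← exists_prop] at hne
    refine hinf (((hfin p (by simpa using hne.1)).union (hfin q (by simpa using hne.2))).subset
      fun z hz ↦ ?_)
    have := hpq z hz
    rw [map_mul, mul_eq_zero] at this
    exact this.imp (⟨hz, ·⟩) (⟨hz, ·⟩)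

theorem isMaximal_of_finite_zeroLocus [IsAlgClosed k] [Finite σ] {P : Ideal (MvPolynomial σ k)}
    [P.IsPrime] (hP : (MvPolynomial.zeroLocus k P).Finite) : P.IsMaximal := by
  have hinf : hP.toFinset.inf (fun z ↦ MvPolynomial.vanishingIdeal k {z}) ≤ P := by
    intro p hp
    rw [← MvPolynomial.IsPrime.vanishingIdeal_zeroLocus (K := k) P]
    exact fun z hz ↦ (Submodule.mem_finsetInf.mp hp) z (hP.mem_toFinset.mpr hz) z rfl
  obtain ⟨z, -, hzP⟩ := (Ideal.IsPrime.inf_le' ‹_›).mp hinf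
  have hmax : (MvPolynomial.vanishingIdeal k {z}).IsMaximal :=
    MvPolynomial.isMaximal_iff_eq_vanishingIdeal_singleton.mpr ⟨z, rfl⟩
  rwa [← hmax.eq_of_le (Ideal.IsPrime.ne_top ‹_›) hzP]

theorem dimensionLEOne_quotient {R : Type*} [CommRing R] {I : Ideal R}
    (h : ∀ P : Ideal R, I < P → P.IsPrime → P.IsMaximal) : Ring.DimensionLEOne (R ⧸ I) := by
  refine ⟨fun {p} hp hp_prime ↦ ?_⟩
  have hmk : Function.Surjective (Ideal.Quotient.mk I) := Ideal.Quotient.mk_surjective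
  have hlt : I < p.comap (Ideal.Quotient.mk I) := by
    conv_lhs => rw [← Ideal.mk_ker (I := I), RingHom.ker_eq_comap_bot]
    exact (Ideal.orderEmbeddingOfSurjective _ hmk).strictMono hp.bot_lt
  have hmap := Ideal.map_eq_top_or_isMaximal_of_surjective _ hmk (h _ hlt inferInstance)
  rw [Ideal.map_comap_of_surjective _ hmk] at hmap
  exact hmap.resolve_left hp_prime.ne_top

theorem dimensionLEOne_quotient_vanishingIdeal [IsAlgClosed k] [Finite σ]
    (hZ : MvPolynomial.zeroLocus k (MvPolynomial.vanishingIdeal k Z) ⊆ Z)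
    (hfin : ∀ p : MvPolynomial σ k, (∃ z ∈ Z, MvPolynomial.aeval z p ≠ 0) →
      {z ∈ Z | MvPolynomial.aeval z p = 0}.Finite) :
    Ring.DimensionLEOne (MvPolynomial σ k ⧸ MvPolynomial.vanishingIdeal k Z) := by
  refine dimensionLEOne_quotient fun P hP hP_prime ↦ isMaximal_of_finite_zeroLocus ?_
  obtain ⟨hle, p, hpP, hp⟩ := SetLike.lt_iff_le_and_exists.mp hP
  rw [MvPolynomial.mem_vanishingIdeal_iff] at hp
  push Not at hp
  exact (hfin p hp).subset fun z hz ↦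
    ⟨hZ (MvPolynomial.zeroLocus_anti_mono hle hz), hz p hpP⟩

theorem algebraicOn_aeval_of_trdeg_le_one [(MvPolynomial.vanishingIdeal k Z).IsPrime]
    (htrdeg : Algebra.trdeg k (MvPolynomial σ k ⧸ MvPolynomial.vanishingIdeal k Z) ≤ 1)
    (f g : MvPolynomial σ k) :
    AlgebraicOn (fun z ↦ MvPolynomial.aeval z f) (fun z ↦ MvPolynomial.aeval z g) Z := by
  let I := MvPolynomial.vanishingIdeal k Z
  have hdep : ¬ AlgebraicIndependent k (Ideal.Quotient.mkₐ k I ∘ ![f, g]) := fun h ↦ by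
    have := h.lift_cardinalMk_le_trdeg.trans (Cardinal.lift_le.mpr htrdeg)
    simp at this
  obtain ⟨P, hP, hP0⟩ :
      ∃ P, MvPolynomial.aeval (Ideal.Quotient.mkₐ k I ∘ ![f, g]) P = 0 ∧ P ≠ 0 := by
    simpa [algebraicIndependent_iff] using hdep
  refine ⟨(Bivariate.equivMvPolynomial k).symm P, by simpa using hP0, fun z hz ↦ ?_⟩
  have hmem : MvPolynomial.aeval ![f, g] P ∈ I := by
    rw [← Ideal.Quotient.eq_zero_iff_mem, ← Ideal.Quotient.mkₐ_eq_mk k,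
      MvPolynomial.comp_aeval_apply]
    exact hP
  have := hmem z hz
  rw [MvPolynomial.comp_aeval_apply] at this
  rw [evalEval_symm_equivMvPolynomial, ← this]
  congr
  ext i
  fin_cases i <;> rfl

theorem algebraicOn_aeval [IsAlgClosed k] [Finite σ] (hinf : Z.Infinite)
    (hZ : MvPolynomial.zeroLocus k (MvPolynomial.vanishingIdeal k Z) ⊆ Z)
    (hfin : ∀ p : MvPolynomial σ k, (∃ z ∈ Z, MvPolynomial.aeval z p ≠ 0) →
      {z ∈ Z | MvPolynomial.aeval z p = 0}.Finite) (f g : MvPolynomial σ k) :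
    AlgebraicOn (fun z ↦ MvPolynomial.aeval z f) (fun z ↦ MvPolynomial.aeval z g) Z := by
  have := isPrime_vanishingIdeal hinf hfin
  have := dimensionLEOne_quotient_vanishingIdeal hZ hfin
  exact algebraicOn_aeval_of_trdeg_le_one (trdeg_le_one_of_dimensionLEOne _ _) f g

end CoordinateRing

section Curves

variable {n : ℕ} {Z : Set (EuclideanSpace ℂ (Fin n))}

theorem IsAlgebraicSet.isClosed (hZ : IsAlgebraicSet Z) : IsClosed Z := by
  obtain ⟨S, rfl⟩ := hZ
  simp only [ofPred_forall]
  exact isClosed_biInter fun p _ ↦ isClosed_eq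
    ((MvPolynomial.continuous_eval p).comp (PiLp.continuous_ofLp 2 _)) continuous_const

theorem IsAlgebraicSet.zeroLocus_vanishingIdeal_subset (hZ : IsAlgebraicSet Z) :
    MvPolynomial.zeroLocus ℂ (MvPolynomial.vanishingIdeal ℂ (WithLp.toLp 2 ⁻¹' Z))
      ⊆ WithLp.toLp 2 ⁻¹' Z := by
  obtain ⟨S, rfl⟩ := hZ
  exact fun z hz p hp ↦ hz p fun y hy ↦ hy p hp

theorem IsAlgebraicSet.sep_eval_eq_zero (hZ : IsAlgebraicSet Z) (p : MvPolynomial (Fin n) ℂ) :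
    IsAlgebraicSet {x ∈ Z | MvPolynomial.eval (fun i ↦ x i) p = 0} := by
  classical
  obtain ⟨S, rfl⟩ := hZ
  refine ⟨insert p S, ?_⟩
  ext x
  simp [and_comm]

theorem IsIrreducibleAlgebraicCurve.algebraicOn_eval (hZ : IsIrreducibleAlgebraicCurve Z)
    (f g : MvPolynomial (Fin n) ℂ) :
    AlgebraicOn (fun x ↦ MvPolynomial.eval (fun i ↦ x i) f)
      (fun x ↦ MvPolynomial.eval (fun i ↦ x i) g) Z := by
  obtain ⟨halg, hinf, hmin⟩ := hZ
  have hfin (p : MvPolynomial (Fin n) ℂ)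
      (hp : ∃ z ∈ WithLp.toLp 2 ⁻¹' Z, MvPolynomial.aeval z p ≠ 0) :
      {z ∈ WithLp.toLp 2 ⁻¹' Z | MvPolynomial.aeval z p = 0}.Finite := by
    obtain ⟨z, hz, hzp⟩ := hp
    refine (hmin _ (halg.sep_eval_eq_zero p) ⟨sep_subset _ _, fun h ↦ hzp (h hz).2⟩).preimage
      (WithLp.toLp_injective 2).injOn
  exact (algebraicOn_aeval
    (hinf.preimage ((WithLp.toLp_surjective 2).range_eq ▸ subset_univ Z))
    halg.zeroLocus_vanishingIdeal_subset hfin f g).comp_mapsTo (φ := WithLp.ofLp) fun _ hx ↦ hx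

theorem IsAlgebraicCurve.isClosed (hZ : IsAlgebraicCurve Z) : IsClosed Z := by
  obtain ⟨F, hF, rfl⟩ := hZ
  exact F.finite_toSet.isClosed_biUnion fun Z hZ ↦ (hF Z hZ).1.isClosed

theorem exists_mvPolynomial_eval_eq (ℓ : EuclideanSpace ℂ (Fin n) →L[ℂ] ℂ) :
    ∃ p : MvPolynomial (Fin n) ℂ, ∀ x, MvPolynomial.eval (fun i ↦ x i) p = ℓ x := by
  refine ⟨∑ i, MvPolynomial.C (ℓ (EuclideanSpace.single i 1)) * MvPolynomial.X i, fun x ↦ ?_⟩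
  conv_rhs => rw [← (EuclideanSpace.basisFun (Fin n) ℂ).sum_repr x]
  simp [mul_comm]

theorem IsAlgebraicCurve.algebraicOn (hZ : IsAlgebraicCurve Z)
    (ℓ m : EuclideanSpace ℂ (Fin n) →L[ℂ] ℂ) : AlgebraicOn ℓ m Z := by
  obtain ⟨F, hF, rfl⟩ := hZ
  obtain ⟨p, hp⟩ := exists_mvPolynomial_eval_eq ℓ
  obtain ⟨q, hq⟩ := exists_mvPolynomial_eval_eq m
  exact .biUnion fun Z hZ ↦ by simpa only [hp, hq] using (hF Z hZ).algebraicOn_eval p q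

end Curves

section ProjectionAtInfinity

/-- The filter of neighbourhoods of infinity in `Z`: its members are the sets containing all points
of `Z` outside some bounded set. -/
abbrev inftyWithin {E : Type*} [Bornology E] (Z : Set E) : Filter E := cobounded E ⊓ 𝓟 Z

theorem tendsto_inftyWithin_image {E F : Type*} [PseudoMetricSpace E] [PseudoMetricSpace F]
    {f : E → F} {K : NNReal} (hf : AntilipschitzWith K f) (Z : Set E) :
    Tendsto f (inftyWithin Z) (inftyWithin (f '' Z)) :=
  hf.tendsto_cobounded.inf (tendsto_principal_principal.mpr fun _ ↦ mem_image_of_mem f)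

theorem isCompact_inter_preimage_of_tendsto_inftyWithin {E F : Type*} [PseudoMetricSpace E]
    [ProperSpace E] [MetricSpace F] {f : E → F} {Z : Set E} {K : Set F} (hZ : IsClosed Z)
    (hf : Continuous f) (hZf : Tendsto f (inftyWithin Z) (cobounded F)) (hK : IsCompact K) :
    IsCompact (Z ∩ f ⁻¹' K) := by
  refine isCompact_of_isClosed_isBounded (hZ.inter (hK.isClosed.preimage hf)) ?_
  rw [isBounded_def]
  filter_upwards [mem_inf_principal.mp (hZf (isBounded_def.mp hK.isBounded))] with x hx hxK
  exact hx hxK.1 hxK.2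

variable {𝕜 ι : Type*} [Fintype ι]

/-- The tuples `x` solving `P i (t, x i) = 0` for all `i`. If `P i` relates the linear form `ℓ` to
the `i`-th coordinate on a curve, these include the points of the curve with `ℓ x = t`. -/
def rootTuples [CommSemiring 𝕜] (P : ι → 𝕜[X][Y]) (t : 𝕜) : Set (ι → 𝕜) :=
  {x | ∀ i, (P i).evalEval t (x i) = 0}

section NontriviallyNormedField

variable [NontriviallyNormedField 𝕜] [ProperSpace 𝕜]

theorem exists_dual_id_isBigO {Z : Set (ι → 𝕜)} (hZ : ∀ i j, AlgebraicOn (· j) (· i) Z)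
    {w : ι → 𝕜} (hw : w ≠ 0) :
    ∃ ℓ : (ι → 𝕜) →L[𝕜] 𝕜, ℓ w ≠ 0 ∧ (fun x ↦ x) =O[inftyWithin Z] ℓ := by
  refine exists_dual_isBigO (τ := fun j x ↦ x j) inf_le_right (fun j ↦ ?_)
    (fun i j ↦ (hZ i j).div .self) hw
  rw [← tendsto_norm_atTop_iff_cobounded]
  refine tendsto_atTop_mono' _ (mem_inf_of_right (mem_principal_self _)) ?_
  exact tendsto_norm_cobounded_atTop.mono_left (inf_le_left.trans inf_le_left)

theorem exists_dual_norm_sub_le_of_mem_rootTuples {P : ι → 𝕜[X][Y]} (hP : ∀ i, P i ≠ 0) {w : ι → 𝕜}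
    (hw : w ≠ 0) :
    ∃ m : (ι → 𝕜) →L[𝕜] 𝕜, m w ≠ 0 ∧ ∃ C ≥ 0, ∀ᶠ t in cobounded 𝕜,
      ∀ x ∈ rootTuples P t, ∀ y ∈ rootTuples P t, ‖x - y‖ ≤ C * ‖m (x - y)‖ := by
  let s : Set (𝕜 × (ι → 𝕜) × (ι → 𝕜)) := {a | a.2.1 ∈ rootTuples P a.1 ∧ a.2.2 ∈ rootTuples P a.1}
  have hsub (i) : AlgebraicOn Prod.fst (fun a ↦ a.2.1 i - a.2.2 i) s :=
    .sub ⟨P i, hP i, fun _ ha ↦ ha.1 i⟩ ⟨P i, hP i, fun _ ha ↦ ha.2 i⟩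
  obtain ⟨m, hmw, hm⟩ := exists_dual_isBigO (v := fun a ↦ a.2.1 - a.2.2)
    (l := comap Prod.fst (cobounded 𝕜) ⊓ 𝓟 s) inf_le_right
    (fun _ ↦ tendsto_comap.mono_left (inf_le_left.trans inf_le_left))
    (fun i j ↦ (hsub i).div (hsub j)) hw
  obtain ⟨C, hC, hbound⟩ := hm.exists_nonneg
  refine ⟨m, hmw, C, hC, ?_⟩
  filter_upwards [eventually_comap.mp (eventually_inf_principal.mp hbound.bound)]
    with t ht x hx y hy
  exact ht (t, x, y) rfl ⟨hx, hy⟩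

end NontriviallyNormedField

theorem exists_near_rootTuple {P : ι → ℂ[X][Y]} (hP : ∀ i, P i ≠ 0) (M : ℝ) :
    ∃ C ≥ 0, ∀ᶠ t₀ in cobounded ℂ, ∀ t, ∀ y₀ ∈ rootTuples P t₀, ‖t - t₀‖ < ‖t₀‖ / 4 →
      ‖y₀‖ ≤ M * ‖t₀‖ → ∃ y ∈ rootTuples P t, ‖y - y₀‖ ≤ C * ‖t - t₀‖ := by
  choose C hC using fun i ↦ RootsLipschitzAtInfinity.of_ne_zero (hP i) M
  obtain ⟨B, hB⟩ := (finite_range C).bddAbove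
  refine ⟨max B 0, le_max_right _ _, ?_⟩
  filter_upwards [eventually_all.mpr hC] with t₀ ht₀ t y₀ hy₀ ht hMy₀
  choose y hy hyC using fun i ↦ ht₀ i t (y₀ i) ht ((norm_le_pi_norm y₀ i).trans hMy₀) (hy₀ i)
  refine ⟨y, hy, (pi_norm_le_iff_of_nonneg (by positivity)).mpr fun i ↦ (hyC i).trans ?_⟩
  gcongr
  exact (hB (mem_range_self i)).trans (le_max_left _ _)

/-- The point `y` is first moved along its branch into the fibre of `x`. -/
theorem exists_norm_sub_le_mul_add_of_mem_rootTuples {P : ι → ℂ[X][Y]} (hP : ∀ i, P i ≠ 0) (M : ℝ)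
    {m : (ι → ℂ) →L[ℂ] ℂ} {C : ℝ} (hC : 0 ≤ C) (hm : ∀ᶠ t in cobounded ℂ,
      ∀ x ∈ rootTuples P t, ∀ y ∈ rootTuples P t, ‖x - y‖ ≤ C * ‖m (x - y)‖) :
    ∃ C' ≥ 0, ∀ᶠ t₀ in cobounded ℂ, ∀ t, ∀ x ∈ rootTuples P t, ∀ y ∈ rootTuples P t₀,
      ‖t - t₀‖ < ‖t₀‖ / 4 → ‖y‖ ≤ M * ‖t₀‖ → ‖x - y‖ ≤ C' * (‖t - t₀‖ + ‖m (x - y)‖) := by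
  obtain ⟨B, hB, htransport⟩ := exists_near_rootTuple hP M
  refine ⟨C * (1 + ‖m‖ * B) + B, by positivity, ?_⟩
  filter_upwards [htransport, eventually_cobounded_forall_mem_ball (c := 1 / 4) (by norm_num) hm]
    with t₀ htransport hm t x hx y hy ht hMy
  obtain ⟨y', hy', hy'y⟩ := htransport t y hy ht hMy
  have hxy' := hm t (mem_ball_iff_norm.mpr (by linarith)) x hx y' hy'
  have hmxy' : ‖m (x - y')‖ ≤ ‖m (x - y)‖ + ‖m‖ * (B * ‖t - t₀‖) := calc
    ‖m (x - y')‖ = ‖m (x - y) - m (y' - y)‖ := by rw [← map_sub, sub_sub_sub_cancel_right]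
    _ ≤ ‖m (x - y)‖ + ‖m‖ * ‖y' - y‖ := norm_sub_le_of_le le_rfl (m.le_opNorm _)
    _ ≤ _ := by gcongr
  calc ‖x - y‖ ≤ ‖x - y'‖ + ‖y' - y‖ := norm_sub_le_norm_sub_add_norm_sub _ _ _
    _ ≤ C * (‖m (x - y)‖ + ‖m‖ * (B * ‖t - t₀‖)) + B * ‖t - t₀‖ := by
      gcongr
      exact hxy'.trans (by gcongr)
    _ ≤ _ := by
      have : 0 ≤ C * ‖t - t₀‖ + (C * (‖m‖ * B) + B) * ‖m (x - y)‖ := by positivity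
      linarith

theorem norm_sub_le_of_norm_le_of_norm_le {E F : Type*} [SeminormedAddCommGroup E]
    [SeminormedAddCommGroup F] {A : ℝ} (hA : 0 ≤ A) {x y : E} {s t : F} (hx : ‖x‖ ≤ A * ‖s‖)
    (hy : ‖y‖ ≤ A * ‖t‖) (hst : ‖t‖ / 4 ≤ ‖s - t‖) : ‖x - y‖ ≤ 9 * A * ‖s - t‖ := calc
  ‖x - y‖ ≤ A * ‖s‖ + A * ‖t‖ := norm_sub_le_of_le hx hy
  _ = A * (‖s‖ + ‖t‖) := by ring
  _ ≤ A * (9 * ‖s - t‖) := by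
    gcongr
    linarith [norm_sub_norm_le s t]
  _ = 9 * A * ‖s - t‖ := by ring

theorem tendsto_cobounded_of_id_isBigO {E F : Type*} [NormedAddCommGroup E] [NormedSpace ℂ E]
    [NormedAddCommGroup F] [NormedSpace ℂ F] {ℓ : E →L[ℂ] F} {l : Filter E} (hl : l ≤ cobounded E)
    (h : (fun x ↦ x) =O[l] ℓ) : Tendsto ℓ l (cobounded F) :=
  tendsto_norm_atTop_iff_cobounded.mp <|
    (IsTheta.tendsto_norm_atTop_iff ⟨h, ℓ.isBigO_id l⟩).mp <|
      tendsto_norm_cobounded_atTop.mono_left hl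

theorem exists_dual_sub_isBigO_prod_sub {Z : Set (ι → ℂ)} {ℓ : (ι → ℂ) →L[ℂ] ℂ}
    (hZ : ∀ i, AlgebraicOn ℓ (· i) Z) (hℓ : (fun x ↦ x) =O[inftyWithin Z] ℓ) {w : ι → ℂ}
    (hw : w ≠ 0) :
    ∃ m : (ι → ℂ) →L[ℂ] ℂ, m w ≠ 0 ∧ (fun p ↦ p.1 - p.2) =O[inftyWithin Z ×ˢ inftyWithin Z]
      fun p ↦ ℓ.prod m (p.1 - p.2) := by
  choose P hP hPZ using hZ
  obtain ⟨A, hA, hℓA⟩ := hℓ.exists_nonneg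
  obtain ⟨m, hmw, C, hC, hm⟩ := exists_dual_norm_sub_le_of_mem_rootTuples hP hw
  obtain ⟨C', hC', hnear⟩ := exists_norm_sub_le_mul_add_of_mem_rootTuples hP A hC hm
  have htends := tendsto_cobounded_of_id_isBigO inf_le_left hℓ
  have hZmem : ∀ᶠ x in inftyWithin Z, x ∈ Z := mem_inf_of_right (mem_principal_self Z)
  refine ⟨m, hmw, .of_bound (9 * A + 2 * C') ?_⟩
  filter_upwards [(hℓA.bound.and hZmem).prod_mk
    (hℓA.bound.and (hZmem.and (htends.eventually hnear)))]
  rintro ⟨x, y⟩ ⟨⟨hxA, hx⟩, hyA, hy, hnear⟩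
  have hle_ℓ : ‖ℓ x - ℓ y‖ ≤ ‖ℓ.prod m (x - y)‖ := map_sub ℓ x y ▸ le_max_left _ _
  have hle_m : ‖m (x - y)‖ ≤ ‖ℓ.prod m (x - y)‖ := le_max_right _ _
  obtain hlt | hge := lt_or_ge ‖ℓ x - ℓ y‖ (‖ℓ y‖ / 4)
  · have hxy := hnear (ℓ x) x (fun i ↦ hPZ i x hx) y (fun i ↦ hPZ i y hy) hlt hyA
    calc ‖x - y‖ ≤ C' * (‖ℓ x - ℓ y‖ + ‖m (x - y)‖) := hxy
      _ ≤ C' * (‖ℓ.prod m (x - y)‖ + ‖ℓ.prod m (x - y)‖) := by gcongr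
      _ = 2 * C' * ‖ℓ.prod m (x - y)‖ := by ring
      _ ≤ _ := by gcongr; linarith
  · calc ‖x - y‖ ≤ 9 * A * ‖ℓ x - ℓ y‖ := norm_sub_le_of_norm_le_of_norm_le hA hxA hyA hge
      _ ≤ (9 * A + 2 * C') * ‖ℓ.prod m (x - y)‖ := by gcongr; linarith

theorem surjective_prod_of_apply_ne_zero {𝕜 E : Type*} [Field 𝕜] [AddCommGroup E] [Module 𝕜 E]
    {ℓ m : E →ₗ[𝕜] 𝕜} (hℓ : ℓ ≠ 0) {w : E} (hℓw : ℓ w = 0) (hmw : m w ≠ 0) :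
    Function.Surjective (ℓ.prod m) := by
  rintro ⟨a, b⟩
  obtain ⟨v, rfl⟩ := LinearMap.surjective hℓ a
  refine ⟨v + ((b - m v) / m w) • w, Prod.ext ?_ ?_⟩ <;> simp [hℓw, hmw]

theorem exists_clm_prod_isBigO (hι : 1 < Fintype.card ι) {Z : Set (ι → ℂ)}
    (hZ : ∀ ℓ m : (ι → ℂ) →L[ℂ] ℂ, AlgebraicOn ℓ m Z) :
    ∃ π : (ι → ℂ) →L[ℂ] ℂ × ℂ, Function.Surjective π ∧
      Tendsto π (inftyWithin Z) (cobounded (ℂ × ℂ)) ∧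
      (fun p ↦ p.1 - p.2) =O[inftyWithin Z ×ˢ inftyWithin Z] fun p ↦ π (p.1 - p.2) := by
  have := Fintype.one_lt_card_iff_nontrivial.mp hι
  obtain ⟨w₀, hw₀⟩ := exists_ne (0 : ι → ℂ)
  obtain ⟨ℓ, hℓw₀, hℓ⟩ := exists_dual_id_isBigO (fun i j ↦ hZ (.proj j) (.proj i)) hw₀
  obtain ⟨w, hw, hℓw⟩ : ∃ w ≠ 0, ℓ w = 0 := by
    have : LinearMap.ker ℓ.toLinearMap ≠ ⊥ := LinearMap.ker_ne_bot_of_finrank_lt (by simpa)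
    obtain ⟨w, hw, hw0⟩ := Submodule.exists_mem_ne_zero_of_ne_bot this
    exact ⟨w, hw0, hw⟩
  obtain ⟨m, hmw, hm⟩ := exists_dual_sub_isBigO_prod_sub (fun i ↦ hZ ℓ (.proj i)) hℓ hw
  refine ⟨ℓ.prod m, ?_, ?_, hm⟩
  · refine surjective_prod_of_apply_ne_zero (ℓ := ℓ.toLinearMap) (m := m.toLinearMap) ?_ hℓw hmw
    exact fun h ↦ hℓw₀ (DFunLike.congr_fun h w₀)
  · exact tendsto_cobounded_of_id_isBigO inf_le_left
      (hℓ.trans (.of_bound' (.of_forall fun x ↦ le_max_left _ _)))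

section FiniteDimensional

variable {E F : Type*} [NormedAddCommGroup E] [NormedSpace ℂ E] [NormedAddCommGroup F]
  [NormedSpace ℂ F] {Z : Set E}

theorem exists_clm_sub_isBigO [FiniteDimensional ℂ E] [FiniteDimensional ℂ F]
    (hE : 1 < Module.finrank ℂ E) (hF : Module.finrank ℂ F = 2)
    (hZ : ∀ ℓ m : E →L[ℂ] ℂ, AlgebraicOn ℓ m Z) :
    ∃ π : E →L[ℂ] F, Function.Surjective π ∧ Tendsto π (inftyWithin Z) (cobounded F) ∧
      (fun p ↦ p.1 - p.2) =O[inftyWithin Z ×ˢ inftyWithin Z] fun p ↦ π (p.1 - p.2) := by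
  let e : E ≃L[ℂ] (Fin (Module.finrank ℂ E) → ℂ) := .ofFinrankEq (by simp)
  let e' : (ℂ × ℂ) ≃L[ℂ] F := .ofFinrankEq (by simp [hF])
  obtain ⟨π, hsurj, htends, hbigO⟩ := exists_clm_prod_isBigO (Z := e '' Z) (by simpa) fun ℓ m ↦ by
    obtain ⟨Q, hQ0, hQ⟩ := hZ (ℓ ∘L e) (m ∘L e)
    exact ⟨Q, hQ0, forall_mem_image.mpr hQ⟩
  have he := tendsto_inftyWithin_image e.antilipschitz Z
  refine ⟨(e' : ℂ × ℂ →L[ℂ] F) ∘L π ∘L e, e'.surjective.comp (hsurj.comp e.surjective),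
    e'.antilipschitz.tendsto_cobounded.comp (htends.comp he), ?_⟩
  have hπe : (fun p ↦ e (p.1 - p.2)) =O[inftyWithin Z ×ˢ inftyWithin Z]
      fun p ↦ π (e (p.1 - p.2)) := by
    simpa [Function.comp_def] using hbigO.comp_tendsto (he.prodMap he)
  exact (e.isBigO_comp_rev _ _).trans (hπe.trans (e'.isBigO_comp_rev _ _))

theorem exists_pos_forall_le_norm_of_eventually_inftyWithin (π : E →L[ℂ] F) {p : E × E → Prop}
    (h : ∀ᶠ q in inftyWithin Z ×ˢ inftyWithin Z, p q) :
    ∃ r > 0, ∀ x ∈ Z, ∀ y ∈ Z, r ≤ ‖π x‖ → r ≤ ‖π y‖ → p (x, y) := by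
  obtain ⟨U, hU, hUp⟩ := eventually_prod_self_iff'.mp h
  have hcomap : {x | x ∈ Z → x ∈ U} ∈ comap π (cobounded F) :=
    comap_cobounded_le π (mem_inf_principal.mp hU)
  obtain ⟨r, -, hr⟩ := (hasBasis_cobounded_norm.comap π).mem_iff.mp hcomap
  refine ⟨max r 1, by positivity, fun x hx y hy hrx hry ↦ hUp x ?_ y ?_⟩
  · exact hr ((le_max_left r 1).trans hrx) hx
  · exact hr ((le_max_left r 1).trans hry) hy

end FiniteDimensional

end ProjectionAtInfinity

theorem stmt_0_general {E F : Type*} [NormedAddCommGroup E] [NormedSpace ℂ E]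
    [FiniteDimensional ℂ E] [NormedAddCommGroup F] [NormedSpace ℂ F] [FiniteDimensional ℂ F]
    (hE : 1 < Module.finrank ℂ E) (hF : Module.finrank ℂ F = 2) {Z : Set E} (hZ : IsClosed Z)
    (hZalg : ∀ ℓ m : E →L[ℂ] ℂ, AlgebraicOn ℓ m Z) :
    ∃ (r : ℝ) (π : E →ₗ[ℂ] F), 0 < r ∧ Function.Surjective π ∧
      (∀ K : Set F, IsCompact K → IsCompact (Z ∩ ⇑π ⁻¹' K)) ∧
      MapsTo π (Z \ ⇑π ⁻¹' ball 0 r) (ball 0 r)ᶜ ∧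
      ∃ C : ℝ, 1 ≤ C ∧ ∀ x ∈ Z \ ⇑π ⁻¹' ball 0 r, ∀ y ∈ Z \ ⇑π ⁻¹' ball 0 r,
        C⁻¹ * ‖x - y‖ ≤ ‖π x - π y‖ ∧ ‖π x - π y‖ ≤ C * ‖x - y‖ := by
  have := FiniteDimensional.proper ℂ E
  obtain ⟨π, hsurj, htends, hbigO⟩ := exists_clm_sub_isBigO hE hF hZalg
  obtain ⟨C, hC⟩ := hbigO.bound
  obtain ⟨r, hr, hrC⟩ := exists_pos_forall_le_norm_of_eventually_inftyWithin π hC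
  refine ⟨r, π, hr, hsurj,
    fun K hK ↦ isCompact_inter_preimage_of_tendsto_inftyWithin hZ π.continuous htends hK,
    fun x hx ↦ hx.2, max 1 (max C ‖π‖), le_max_left _ _, fun x hx y hy ↦ ⟨?_, ?_⟩⟩
  · have hxy : ‖x - y‖ ≤ C * ‖π (x - y)‖ :=
      hrC x hx.1 y hy.1 (by simpa using hx.2) (by simpa using hy.2)
    rw [inv_mul_le_iff₀ (by positivity), ← map_sub]
    refine hxy.trans ?_
    gcongr
    · exact (le_max_left _ _).trans (le_max_right _ _)
    · exact le_rfl
  · rw [← map_sub]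
    refine (π.le_opNorm _).trans ?_
    gcongr
    exact (le_max_right _ _).trans (le_max_right _ _)

end

/-- For `n > 2` and an algebraic curve `X ⊂ ℂⁿ`, there exist `r > 0` and a
surjective linear map `π : ℂⁿ → ℂ²` whose restriction to `X` is proper, and which is a
bi-Lipschitz embedding of `X \ π⁻¹(B(0,r))` into `ℂ² \ B(0,r)`. -/
theorem stmt_0 (n : ℕ) (hn : 2 < n) (X : Set (EuclideanSpace ℂ (Fin n)))
    (hX : IsAlgebraicCurve X) :
    ∃ (r : ℝ) (π : EuclideanSpace ℂ (Fin n) →ₗ[ℂ] EuclideanSpace ℂ (Fin 2)),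
      0 < r ∧ Function.Surjective π ∧
      (∀ K : Set (EuclideanSpace ℂ (Fin 2)), IsCompact K → IsCompact (X ∩ ⇑π ⁻¹' K)) ∧
      Set.MapsTo (⇑π) (X \ ⇑π ⁻¹' Metric.ball 0 r) ((Metric.ball 0 r)ᶜ) ∧
      ∃ C : ℝ, 1 ≤ C ∧
        ∀ x ∈ X \ ⇑π ⁻¹' Metric.ball 0 r, ∀ y ∈ X \ ⇑π ⁻¹' Metric.ball 0 r,
          C⁻¹ * ‖x - y‖ ≤ ‖π x - π y‖ ∧ ‖π x - π y‖ ≤ C * ‖x - y‖ :=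
  stmt_0_general (by rw [finrank_euclideanSpace_fin]; omega) finrank_euclideanSpace_fin
    hX.isClosed hX.algebraicOn

end
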